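/- Let f : ℝ^d → ℝ be differentiable with L-Lipschitz gradient (L > 0), bounded below by f_min ∈ ℝ, and let ε > 0, 0 < δ < 1/L. Let (θ_k)_{k∈ℕ} be a sequence in ℝ^d and (g_k)_{k∈ℕ} a sequence in ℝ^d such that for every k: (a) ‖g_k − ∇f(θ_k)‖ ≤ ε, and (b) ⟨θ_k − θ_{k+1}, g_k + (1/δ)(θ_{k+1} − θ_k)⟩ ≥ 0. Then for every natural number K* with K* ≥ L·(f(θ_0) − f_min)/(4ε²), there exists k ∈ {0, 1, …, K*} such that ‖θ_{k+1} − θ_k‖ ≤ 4ε/L. -/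

import Mathlib

/-!
With `r = ‖θ (k + 1) - θ k‖`, the variational inequality makes `θ (k + 1) - θ k` a descent direction
up to the gradient error: `⟪∇f (θ k), θ (k + 1) - θ k⟫ ≤ ε r - r² / δ`. Since `1 / δ ≥ L`, the
quadratic upper bound for `L`-smooth functions gives `f (θ k) - f (θ (k + 1)) ≥ L r² / 2 - ε r`.
The total decrease over `N` steps is at most `f (θ 0) - fmin ≤ N * (4 ε² / L)`, so some step
decreases `f` by at most `4 ε² / L`, and `L r² / 2 - ε r ≤ 4 ε² / L` forces `r ≤ 4 ε / L`.
-/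

open scoped RealInnerProductSpace

section Calculus

variable {E F : Type*} [NormedAddCommGroup E] [NormedSpace ℝ E]
  [NormedAddCommGroup F] [NormedSpace ℝ F]

theorem norm_image_sub_le_of_norm_deriv_le_mul_sub {f f' : ℝ → F} {C a b : ℝ} (hab : a ≤ b)
    (hf : ∀ t ∈ Set.Icc a b, HasDerivWithinAt f (f' t) (Set.Icc a b) t)
    (bound : ∀ t ∈ Set.Ico a b, ‖f' t‖ ≤ C * (t - a)) :
    ‖f b - f a‖ ≤ C / 2 * (b - a) ^ 2 := by
  have hf_right : ∀ t ∈ Set.Ico a b,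
      HasDerivWithinAt (fun t ↦ f t - f a) (f' t) (Set.Ici t) t := fun t ht ↦
    ((hf t (Set.Ico_subset_Icc_self ht)).mono_of_mem_nhdsWithin
      (Icc_mem_nhdsGE_of_mem ht)).sub_const (f a)
  have hquad : ∀ t, HasDerivAt (fun t ↦ C / 2 * (t - a) ^ 2) (C * (t - a)) t := fun t ↦
    ((((hasDerivAt_id' t).sub_const a).pow 2).const_mul (C / 2)).congr_deriv (by push_cast; ring)
  exact image_norm_le_of_norm_deriv_right_le_deriv_boundary
    (fun t ht ↦ (hf t ht).continuousWithinAt.sub continuousWithinAt_const) hf_right (by simp)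
    hquad bound (Set.right_mem_Icc.2 hab)

theorem norm_image_sub_sub_le_of_norm_hasFDerivWithin_sub_le_mul {f : E → F} {f' : E → E →L[ℝ] F}
    {φ : E →L[ℝ] F} {L : ℝ} {s : Set E} {x y : E}
    (hf : ∀ z ∈ s, HasFDerivWithinAt f (f' z) s z) (bound : ∀ z ∈ s, ‖f' z - φ‖ ≤ L * ‖z - x‖)
    (hs : Convex ℝ s) (hx : x ∈ s) (hy : y ∈ s) :
    ‖f y - f x - φ (y - x)‖ ≤ L / 2 * ‖y - x‖ ^ 2 := by
  let γ : ℝ → E := AffineMap.lineMap x y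
  have hγ : Set.MapsTo γ (Set.Icc 0 1) s := hs.mapsTo_lineMap hx hy
  have hderiv : ∀ t ∈ Set.Icc (0 : ℝ) 1,
      HasDerivWithinAt (fun t ↦ f (γ t) - φ (γ t)) ((f' (γ t) - φ) (y - x)) (Set.Icc 0 1) t :=
    fun t ht ↦ ((hf (γ t) (hγ ht)).sub φ.hasFDerivWithinAt).comp_hasDerivWithinAt t
      AffineMap.hasDerivWithinAt_lineMap hγ
  have hbound : ∀ t ∈ Set.Ico (0 : ℝ) 1,
      ‖(f' (γ t) - φ) (y - x)‖ ≤ L * ‖y - x‖ ^ 2 * (t - 0) := by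
    intro t ht
    have hγ_sub : ‖γ t - x‖ = t * ‖y - x‖ := by
      simp [γ, AffineMap.lineMap_apply_module', norm_smul, abs_of_nonneg ht.1]
    calc ‖(f' (γ t) - φ) (y - x)‖ ≤ L * ‖γ t - x‖ * ‖y - x‖ :=
          ContinuousLinearMap.le_of_opNorm_le _ (bound _ (hγ (Set.Ico_subset_Icc_self ht))) _
      _ = L * ‖y - x‖ ^ 2 * (t - 0) := by rw [hγ_sub]; ring
  calc ‖f y - f x - φ (y - x)‖ = ‖f (γ 1) - φ (γ 1) - (f (γ 0) - φ (γ 0))‖ := by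
        simp only [γ, AffineMap.lineMap_apply_zero, AffineMap.lineMap_apply_one, map_sub]
        congr 1
        abel
    _ ≤ L * ‖y - x‖ ^ 2 / 2 * (1 - 0) ^ 2 :=
        norm_image_sub_le_of_norm_deriv_le_mul_sub zero_le_one hderiv hbound
    _ = L / 2 * ‖y - x‖ ^ 2 := by ring

end Calculus

section InnerProductSpace

variable {E : Type*} [NormedAddCommGroup E] [InnerProductSpace ℝ E]

theorem inner_le_mul_norm_sub_mul_sq_of_norm_sub_le {x y g v : E} {c ε : ℝ} (hg : ‖g - v‖ ≤ ε)
    (hstep : 0 ≤ ⟪x - y, g + c • (y - x)⟫) :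
    ⟪v, y - x⟫ ≤ ε * ‖y - x‖ - c * ‖y - x‖ ^ 2 := by
  have hinner : ⟪g, y - x⟫ ≤ -(c * ‖y - x‖ ^ 2) := by
    rw [← neg_sub y x, inner_neg_left, inner_add_right, real_inner_smul_right,
      real_inner_self_eq_norm_sq, real_inner_comm] at hstep
    linarith
  have herror : ⟪v - g, y - x⟫ ≤ ε * ‖y - x‖ :=
    (real_inner_le_norm _ _).trans (by rw [norm_sub_rev]; gcongr)
  rw [inner_sub_left] at herror
  linarith

variable [CompleteSpace E] {f : E → ℝ} {L : ℝ} {x y : E}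

theorem image_le_add_inner_gradient_add_mul_sq (hf : Differentiable ℝ f)
    (hgrad : ∀ z, ‖gradient f z - gradient f x‖ ≤ L * ‖z - x‖) :
    f y ≤ f x + ⟪gradient f x, y - x⟫ + L / 2 * ‖y - x‖ ^ 2 := by
  have hfderiv : ∀ z, ‖fderiv ℝ f z - fderiv ℝ f x‖ ≤ L * ‖z - x‖ := fun z ↦ by
    simpa only [← toDual_gradient, ← map_sub, LinearIsometryEquiv.norm_map] using hgrad z
  have htaylor : ‖f y - f x - fderiv ℝ f x (y - x)‖ ≤ L / 2 * ‖y - x‖ ^ 2 :=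
    norm_image_sub_sub_le_of_norm_hasFDerivWithin_sub_le_mul
      (fun z _ ↦ (hf z).hasFDerivAt.hasFDerivWithinAt) (fun z _ ↦ hfderiv z) convex_univ
      (Set.mem_univ x) (Set.mem_univ y)
  rw [← toDual_gradient, InnerProductSpace.toDual_apply_apply] at htaylor
  linarith [le_of_abs_le htaylor]

theorem le_image_sub_image_of_inexact_gradient_step (hf : Differentiable ℝ f)
    (hgrad : ∀ z, ‖gradient f z - gradient f x‖ ≤ L * ‖z - x‖) {g : E} {c ε : ℝ}
    (hg : ‖g - gradient f x‖ ≤ ε) (hstep : 0 ≤ ⟪x - y, g + c • (y - x)⟫) :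
    (c - L / 2) * ‖y - x‖ ^ 2 - ε * ‖y - x‖ ≤ f x - f y := by
  linarith [image_le_add_inner_gradient_add_mul_sq (y := y) hf hgrad,
    inner_le_mul_norm_sub_mul_sq_of_norm_sub_le hg hstep]

end InnerProductSpace

theorem exists_sub_succ_le_of_sub_le_nsmul {G : Type*} [AddCommGroup G] [LinearOrder G]
    [IsOrderedAddMonoid G] {u : ℕ → G} {c : G} {n : ℕ} (hn : n ≠ 0) (h : u 0 - u n ≤ n • c) :
    ∃ k < n, u k - u (k + 1) ≤ c := by
  have hsum : ∑ k ∈ Finset.range n, (u k - u (k + 1)) ≤ ∑ _k ∈ Finset.range n, c := by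
    simpa only [Finset.sum_range_sub', Finset.sum_const, Finset.card_range] using h
  simpa only [Finset.mem_range] using
    Finset.exists_le_of_sum_le (Finset.nonempty_range_iff.2 hn) hsum

theorem le_div_of_half_mul_sq_sub_mul_le {L ε r : ℝ} (hL : 0 < L) (hε : 0 ≤ ε)
    (h : L / 2 * r ^ 2 - ε * r ≤ 4 * ε ^ 2 / L) : r ≤ 4 * ε / L := by
  rw [le_div_iff₀ hL] at h ⊢
  have hfactor : (r * L - 4 * ε) * (r * L + 2 * ε) ≤ 0 := by linarith
  by_contra! hlt
  exact hfactor.not_gt (mul_pos (by linarith) (by linarith))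

theorem rsgf_inexact_approx_fixed_point_general {E : Type*} [NormedAddCommGroup E]
    [InnerProductSpace ℝ E] [CompleteSpace E] {f : E → ℝ} {L fmin ε δ : ℝ} {θ g : ℕ → E} {N : ℕ}
    (hL : 0 < L) (hdiff : Differentiable ℝ f)
    (hlip : ∀ x y, ‖gradient f x - gradient f y‖ ≤ L * ‖x - y‖) (hbdd : ∀ k, fmin ≤ f (θ k))
    (hε : 0 < ε) (hδ0 : 0 < δ) (hδ : δ ≤ 1 / L) (ha : ∀ k, ‖g k - gradient f (θ k)‖ ≤ ε)
    (hb : ∀ k, 0 ≤ ⟪θ k - θ (k + 1), g k + (1 / δ) • (θ (k + 1) - θ k)⟫)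
    (hN0 : N ≠ 0) (hN : L * (f (θ 0) - fmin) / (4 * ε ^ 2) ≤ N) :
    ∃ k < N, ‖θ (k + 1) - θ k‖ ≤ 4 * ε / L := by
  have htotal : f (θ 0) - f (θ N) ≤ N • (4 * ε ^ 2 / L) := by
    rw [div_le_iff₀ (by positivity)] at hN
    rw [nsmul_eq_mul, ← mul_div_assoc, le_div_iff₀ hL]
    linarith [mul_le_mul_of_nonneg_left (hbdd N) hL.le]
  obtain ⟨k, hkN, hk⟩ := exists_sub_succ_le_of_sub_le_nsmul (u := f ∘ θ) hN0 htotal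
  refine ⟨k, hkN, le_div_of_half_mul_sq_sub_mul_le hL hε.le ?_⟩
  have hLδ : L ≤ 1 / δ := (le_one_div hL hδ0).2 hδ
  calc L / 2 * ‖θ (k + 1) - θ k‖ ^ 2 - ε * ‖θ (k + 1) - θ k‖
      ≤ (1 / δ - L / 2) * ‖θ (k + 1) - θ k‖ ^ 2 - ε * ‖θ (k + 1) - θ k‖ := by
        gcongr
        linarith
    _ ≤ f (θ k) - f (θ (k + 1)) :=
        le_image_sub_image_of_inexact_gradient_step hdiff (hlip · (θ k)) (ha k) (hb k)
    _ ≤ 4 * ε ^ 2 / L := hk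

/-- Approximate-fixed-point property of the inexact robust safe gradient flow
(item (ii) of the paper's Proposition): if `f` is `L`-smooth and bounded below by
`fmin`, `0 < δ < 1/L`, the gradient estimates satisfy `‖g k - ∇f(θ k)‖ ≤ ε`, and
each step satisfies the variational inequality tested at `y = θ k`, then for every
`K* ≥ L (f(θ 0) - fmin) / (4ε²)` there exists `k ≤ K*` with
`‖θ (k+1) - θ k‖ ≤ 4ε/L`. -/
theorem rsgf_inexact_approx_fixed_point (d : ℕ)
    (f : EuclideanSpace ℝ (Fin d) → ℝ) (L : ℝ) (hL : 0 < L)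
    (hdiff : Differentiable ℝ f)
    (hlip : ∀ x y : EuclideanSpace ℝ (Fin d),
      ‖gradient f x - gradient f y‖ ≤ L * ‖x - y‖)
    (fmin : ℝ) (hbdd : ∀ x, fmin ≤ f x)
    (ε : ℝ) (hε : 0 < ε) (δ : ℝ) (hδ0 : 0 < δ) (hδ : δ < 1 / L)
    (θ g : ℕ → EuclideanSpace ℝ (Fin d))
    (ha : ∀ k, ‖g k - gradient f (θ k)‖ ≤ ε)
    (hb : ∀ k, 0 ≤ ⟪θ k - θ (k + 1), g k + (1 / δ) • (θ (k + 1) - θ k)⟫)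
    (Kstar : ℕ) (hK : L * (f (θ 0) - fmin) / (4 * ε ^ 2) ≤ (Kstar : ℝ)) :
    ∃ k ≤ Kstar, ‖θ (k + 1) - θ k‖ ≤ 4 * ε / L := by
  have hN : L * (f (θ 0) - fmin) / (4 * ε ^ 2) ≤ (Kstar + 1 : ℕ) := hK.trans (by simp)
  simpa only [Nat.lt_succ_iff] using rsgf_inexact_approx_fixed_point_general hL hdiff hlip
    (fun k ↦ hbdd (θ k)) hε hδ0 hδ.le ha hb Kstar.succ_ne_zero hN
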